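/- Let ℓ, β ∈ ℝ and let s : ℝ → ℝ be a function differentiable at α₀ which satisfies cos β = -cos α · cos(s(α) - α) + sin α · sin(s(α) - α) · cos ℓ for all α in some neighborhood of α₀. If D := cos α₀ · sin(s(α₀) - α₀) + sin α₀ · cos(s(α₀) - α₀) · cos ℓ is nonzero, then s'(α₀) = 1 - (sin α₀ · cos(s(α₀) - α₀) + cos α₀ · sin(s(α₀) - α₀) · cos ℓ) / D. -/

import Mathlib

open Real

/-! On the curve `Φ (x, g x) = k` the map `(x, y) ↦ (x, Φ (x, y))` restricts to `x ↦ (x, k)`. If the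
partial derivative of `Φ` in `y` has a left inverse, so does the derivative of this map, and a
continuous `g` is then differentiable. The angle `s α - α` at `B` is such a `g`, with
`Φ (α, b) = -cos α cos b + sin α sin b cos ℓ`, whose partial derivative in `b` is the denominator
`D`. -/

section ImplicitDifferentiation

variable {𝕜 : Type*} [NontriviallyNormedField 𝕜]
  {E F G : Type*} [NormedAddCommGroup E] [NormedSpace 𝕜 E] [NormedAddCommGroup F]
  [NormedSpace 𝕜 F] [NormedAddCommGroup G] [NormedSpace 𝕜 G]

theorem hasFDerivAt_of_eventually_apply_mk_eq_const {Φ : E × F → G} {Φ' : E × F →L[𝕜] G}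
    {Φ₂inv : G →L[𝕜] F} {g : E → F} {a : E} {k : G} (hg : ContinuousAt g a)
    (hΦ : HasFDerivAt Φ Φ' (a, g a))
    (hinv : Function.LeftInverse Φ₂inv (Φ' ∘L ContinuousLinearMap.inr 𝕜 E F))
    (hk : ∀ᶠ x in nhds a, Φ (x, g x) = k) :
    HasFDerivAt g (-(Φ₂inv ∘L Φ' ∘L ContinuousLinearMap.inl 𝕜 E F)) a := by
  let fstΦ' : E × F →L[𝕜] E × G := (ContinuousLinearMap.fst 𝕜 E F).prod Φ'
  let fstΦinv : E × G →L[𝕜] E × F :=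
    (ContinuousLinearMap.fst 𝕜 E G).prod
      (Φ₂inv ∘L (ContinuousLinearMap.snd 𝕜 E G -
        Φ' ∘L ContinuousLinearMap.inl 𝕜 E F ∘L ContinuousLinearMap.fst 𝕜 E G))
  have hfstΦ : HasFDerivAt (fun p : E × F ↦ (p.1, Φ p)) fstΦ' (a, g a) := hasFDerivAt_fst.prodMk hΦ
  have hfstΦinv : Function.LeftInverse fstΦinv fstΦ' := by
    rintro ⟨x, y⟩
    have hy : Φ' (x, y) - Φ' (x, 0) = Φ' (0, y) := by simp [← map_sub]
    simpa [fstΦ', fstΦinv, ← map_sub Φ₂inv, hy] using hinv y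
  have hgraph : HasFDerivAt (fun x ↦ (x, g x))
      (fstΦinv ∘L (ContinuousLinearMap.id 𝕜 E).prod 0) a :=
    hfstΦ.of_comp_of_leftInverse (continuousAt_id.prodMk hg)
      ((hasFDerivAt_id a).prodMk (hasFDerivAt_const k a))
      (hk.mono fun x hx ↦ Prod.ext rfl hx) hfstΦinv
  convert! hgraph.snd using 1
  ext x
  simp [fstΦinv]

theorem hasDerivAt_of_eventually_apply_mk_eq_const {Φ : 𝕜 × 𝕜 → 𝕜} {Φ' : 𝕜 × 𝕜 →L[𝕜] 𝕜} {g : 𝕜 → 𝕜}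
    {a k : 𝕜} (hg : ContinuousAt g a) (hΦ : HasFDerivAt Φ Φ' (a, g a)) (hΦ' : Φ' (0, 1) ≠ 0)
    (hk : ∀ᶠ x in nhds a, Φ (x, g x) = k) :
    HasDerivAt g (-(Φ' (1, 0) / Φ' (0, 1))) a := by
  have hinv : Function.LeftInverse (ContinuousLinearMap.toSpanSingleton 𝕜 (Φ' (0, 1))⁻¹)
      (Φ' ∘L ContinuousLinearMap.inr 𝕜 𝕜 𝕜) := fun y ↦ by
    have hy : Φ' (0, y) = y * Φ' (0, 1) := by simpa using Φ'.map_smul y (0, 1)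
    simp [hy, hΦ']
  simpa [div_eq_mul_inv] using
    (hasFDerivAt_of_eventually_apply_mk_eq_const hg hΦ hinv hk).hasDerivAt

end ImplicitDifferentiation

/-- The cosine of the angle at `C` of a spherical triangle `ABC` with angles `p.1` at `A` and `p.2`
at `B`, as given by the spherical law of cosines. The parameter `c` stands for the cosine of the
side `AB`. -/
noncomputable def cosThirdAngle (c : ℝ) (p : ℝ × ℝ) : ℝ :=
  -cos p.1 * cos p.2 + sin p.1 * sin p.2 * c

theorem hasFDerivAt_cosThirdAngle (c : ℝ) (p : ℝ × ℝ) :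
    HasFDerivAt (cosThirdAngle c)
      ((sin p.1 * cos p.2 + cos p.1 * sin p.2 * c) • ContinuousLinearMap.fst ℝ ℝ ℝ +
        (cos p.1 * sin p.2 + sin p.1 * cos p.2 * c) • ContinuousLinearMap.snd ℝ ℝ ℝ) p := by
  have hfst : HasFDerivAt Prod.fst (ContinuousLinearMap.fst ℝ ℝ ℝ) p := hasFDerivAt_fst
  have hsnd : HasFDerivAt Prod.snd (ContinuousLinearMap.snd ℝ ℝ ℝ) p := hasFDerivAt_snd
  convert! (hfst.cos.fun_neg.fun_mul hsnd.cos).fun_add ((hfst.sin.fun_mul hsnd.sin).mul_const c)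
    using 1
  module

theorem stmt_3_general (c k α₀ : ℝ) (s : ℝ → ℝ) (hs : ContinuousAt s α₀)
    (hrel : ∀ᶠ α in nhds α₀, k = cosThirdAngle c (α, s α - α))
    (hD : cos α₀ * sin (s α₀ - α₀) + sin α₀ * cos (s α₀ - α₀) * c ≠ 0) :
    HasDerivAt s (1 -
      (sin α₀ * cos (s α₀ - α₀) + cos α₀ * sin (s α₀ - α₀) * c) /
      (cos α₀ * sin (s α₀ - α₀) + sin α₀ * cos (s α₀ - α₀) * c)) α₀ := by
  have hb : HasDerivAt (fun α ↦ s α - α)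
      (-((sin α₀ * cos (s α₀ - α₀) + cos α₀ * sin (s α₀ - α₀) * c) /
        (cos α₀ * sin (s α₀ - α₀) + sin α₀ * cos (s α₀ - α₀) * c))) α₀ := by
    simpa using hasDerivAt_of_eventually_apply_mk_eq_const (hs.fun_sub continuousAt_id)
      (hasFDerivAt_cosThirdAngle c (α₀, s α₀ - α₀)) (by simpa using hD)
      (hrel.mono fun _ h ↦ h.symm)
  simpa only [sub_add_cancel, neg_add_eq_sub] using hb.fun_add (hasDerivAt_id' α₀)

theorem stmt_3 (ℓ β α₀ : ℝ) (s : ℝ → ℝ)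
    (hdiff : DifferentiableAt ℝ s α₀)
    (hrel : ∀ᶠ α in nhds α₀,
      Real.cos β = -Real.cos α * Real.cos (s α - α)
        + Real.sin α * Real.sin (s α - α) * Real.cos ℓ)
    (hD : Real.cos α₀ * Real.sin (s α₀ - α₀)
        + Real.sin α₀ * Real.cos (s α₀ - α₀) * Real.cos ℓ ≠ 0) :
    deriv s α₀ = 1 -
      (Real.sin α₀ * Real.cos (s α₀ - α₀)
        + Real.cos α₀ * Real.sin (s α₀ - α₀) * Real.cos ℓ) /
      (Real.cos α₀ * Real.sin (s α₀ - α₀)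
        + Real.sin α₀ * Real.cos (s α₀ - α₀) * Real.cos ℓ) :=
  (stmt_3_general (cos ℓ) (cos β) α₀ s hdiff.continuousAt hrel hD).deriv
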